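/- arXiv:2409.16985 — 2 statements merged into one kernel-verified Lean document; each statement's English description precedes it below -/
import Mathlib

section
/- For every k ≥ 1 there is a K-linear bijection Φ : P_k[X] → ∏_{σ ∈ C_k} K^ℤ that is equivariant for the actions of ℤ: Φ(z · c) = z · Φ(c) for all z ∈ ℤ and c ∈ P_k[X], where (z · c)(m) = c(m − z) on P_k[X] and ℤ acts on each factor K^ℤ by the shift (z · f)(n) = f(n − z). Moreover C_1 is a singleton, so P_1[X] is ℤ-equivariantly isomorphic to the shift representation K^ℤ, while for k ≥ 2 the index set C_k is countably infinite, so P_k[X] is ℤ-equivariantly isomorphic to a countably infinite product of copies of the shift representation K^ℤ. -/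
/-- Translate every element of a multiset of integers by `z`. -/
def shiftM (m : Multiset ℤ) (z : ℤ) : Multiset ℤ := m.map (· + z)

/-- A non-negative composition of order `k`. -/
def IsComp (k : ℕ) (σ : List ℕ) : Prop :=
  σ ≠ [] ∧ (∀ a ∈ σ.head?, 0 < a) ∧ (∀ a ∈ σ.getLast?, 0 < a) ∧ σ.sum = k

/-- `P_k[X]`, realized via multisets of cardinality `k`. -/
abbrev Mk (k : ℕ) := {m : Multiset ℤ // Multiset.card m = k}

/-- The action of `z ∈ ℤ ≅ F₁` on `P_k[X]`: `(z · c)(m) = c(m − z)`. -/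
def zAct (K : Type*) [Field K] (k : ℕ) (z : ℤ) (c : Mk k → K) : Mk k → K :=
  fun m => c ⟨shiftM m.1 (-z), by rw [shiftM, Multiset.card_map]; exact m.2⟩

/-- The multiset encoded by a list of multiplicities starting at `n`. -/
def toM : List ℕ → ℤ → Multiset ℤ
  | [], _ => 0
  | a :: l, n => Multiset.replicate a n + toM l (n + 1)

theorem toM_card (l : List ℕ) : ∀ n, Multiset.card (toM l n) = l.sum := by
  induction l with
  | nil => intro n; simp [toM]
  | cons a l ih => intro n; simp [toM, ih]

theorem toM_shift (l : List ℕ) : ∀ n z, shiftM (toM l n) z = toM l (n + z) := by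
  induction l with
  | nil => intro n z; simp [toM, shiftM]
  | cons a l ih =>
    intro n z
    have h := ih (n + 1) z
    rw [shiftM] at h
    rw [toM, toM, shiftM, Multiset.map_add, h, Multiset.map_replicate]
    congr 2
    ring

theorem toM_ge (l : List ℕ) : ∀ n, ∀ x ∈ toM l n, n ≤ x := by
  induction l with
  | nil => intro n x; simp [toM]
  | cons a l ih =>
    intro n x hx
    rw [toM, Multiset.mem_add] at hx
    rcases hx with hx | hx
    · exact (Multiset.eq_of_mem_replicate hx).ge
    · have := ih _ _ hx
      omega

theorem toM_count_tail (l : List ℕ) (n : ℤ) : Multiset.count n (toM l (n + 1)) = 0 := by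
  apply Multiset.count_eq_zero_of_notMem
  intro h
  have := toM_ge _ _ _ h
  omega

theorem last_tail {a : ℕ} {l : List ℕ} (h : ∀ x ∈ (a :: l).getLast?, 0 < x) :
    ∀ x ∈ l.getLast?, 0 < x := by
  cases l with
  | nil => simp
  | cons b l => simpa [List.getLast?_cons_cons] using h

theorem sum_pos_of_last {a : ℕ} {l : List ℕ} (h : ∀ x ∈ (a :: l).getLast?, 0 < x) :
    0 < (a :: l).sum := by
  have h1 := h _ (List.getLast?_eq_some_getLast (List.cons_ne_nil a l))
  have h2 := List.le_sum_of_mem (List.getLast_mem (List.cons_ne_nil a l))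
  omega

theorem toM_inj (l : List ℕ) : ∀ (l' : List ℕ) (n : ℤ), (∀ x ∈ l.getLast?, 0 < x) →
    (∀ x ∈ l'.getLast?, 0 < x) → toM l n = toM l' n → l = l' := by
  induction l with
  | nil =>
    intro l' n _ h' he
    cases l' with
    | nil => rfl
    | cons b l' =>
      have := sum_pos_of_last h'
      have h2 := congrArg Multiset.card he
      rw [toM_card, toM_card] at h2
      simp only [List.sum_nil] at h2
      omega
  | cons a l ih =>
    intro l' n h h' he
    cases l' with
    | nil =>
      have := sum_pos_of_last h
      have h2 := congrArg Multiset.card he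
      rw [toM_card, toM_card] at h2
      simp only [List.sum_nil] at h2
      omega
    | cons b l' =>
      have hab : a = b := by
        have h2 := congrArg (Multiset.count n) he
        simpa [toM, toM_count_tail] using h2
      subst hab
      rw [toM, toM] at he
      rw [ih l' (n + 1) (last_tail h) (last_tail h') (add_left_cancel he)]

theorem toM_surj (N : ℕ) : ∀ (n : ℤ) (m : Multiset ℤ), (∀ x ∈ m, n ≤ x ∧ x < n + N) →
    ∃ l : List ℕ, (∀ x ∈ l.getLast?, 0 < x) ∧ toM l n = m := by
  induction N with
  | zero =>
    intro n m h
    refine ⟨[], by simp, ?_⟩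
    symm
    apply Multiset.eq_zero_of_forall_notMem
    intro x hx
    have := h x hx
    simp only [Nat.cast_zero] at this
    omega
  | succ N ih =>
    intro n m h
    obtain ⟨l, hl, he⟩ := ih (n + 1) (m.filter (fun x => ¬ (x = n))) (by
      intro x hx
      rw [Multiset.mem_filter] at hx
      have := h x hx.1
      push_cast at this
      omega)
    have hm : Multiset.replicate (m.count n) n + toM l (n + 1) = m := by
      rw [he, ← Multiset.filter_eq', Multiset.filter_add_not]
    by_cases hc : l = [] ∧ m.count n = 0
    · refine ⟨[], by simp, ?_⟩
      rw [hc.2, hc.1] at hm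
      simpa [toM] using hm
    · refine ⟨m.count n :: l, ?_, hm⟩
      cases l with
      | nil => simpa [Nat.pos_iff_ne_zero] using hc
      | cons b l => simpa [List.getLast?_cons_cons] using hl

theorem toM_mem {σ : List ℕ} {k : ℕ} (h : IsComp k σ) (n : ℤ) : n ∈ toM σ n := by
  obtain ⟨h0, h1, -, -⟩ := h
  cases σ with
  | nil => exact absurd rfl h0
  | cons a l =>
    have : 0 < a := h1 a (by simp)
    rw [toM, Multiset.mem_add]
    left
    rw [Multiset.mem_replicate]
    exact ⟨by omega, rfl⟩

/-- The map from compositions and base points to multisets. -/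
def toMk (k : ℕ) (p : {σ : List ℕ // IsComp k σ} × ℤ) : Mk k :=
  ⟨toM p.1.1 p.2, by rw [toM_card]; exact p.1.2.2.2.2⟩

theorem toMk_bij (k : ℕ) (hk : 1 ≤ k) : Function.Bijective (toMk k) := by
  constructor
  · rintro ⟨⟨σ, hσ⟩, n⟩ ⟨⟨τ, hτ⟩, n'⟩ h
    have h : toM σ n = toM τ n' := congrArg Subtype.val h
    have h1 : n' ≤ n := toM_ge τ n' n (h ▸ toM_mem hσ n)
    have h2 : n ≤ n' := toM_ge σ n n' (h ▸ toM_mem hτ n')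
    obtain rfl : n = n' := le_antisymm h2 h1
    obtain rfl := toM_inj σ τ n hσ.2.2.1 hτ.2.2.1 h
    rfl
  · rintro ⟨m, hm⟩
    have hne : m.toFinset.Nonempty := by
      obtain ⟨x, hx⟩ := Multiset.card_pos_iff_exists_mem.1 (show 0 < Multiset.card m by omega)
      exact ⟨x, by simpa using hx⟩
    obtain ⟨n, hn, hmin⟩ := m.toFinset.exists_min_image id hne
    obtain ⟨M, hM, hmax⟩ := m.toFinset.exists_max_image id hne
    simp only [Multiset.mem_toFinset, id] at hn hmin hM hmax
    obtain ⟨l, hl, he⟩ := toM_surj (M - n + 1).toNat n m (by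
      intro x hx
      have := hmin x hx
      have := hmax x hx
      omega)
    have hs : l.sum = k := by rw [← toM_card l n, he, hm]
    refine ⟨⟨⟨l, ?_, ?_, hl, hs⟩, n⟩, Subtype.ext he⟩
    · rintro rfl
      simp at hs
      omega
    · cases l with
      | nil => simp
      | cons a l =>
        have h3 : Multiset.count n (toM (a :: l) n) = a := by
          simp [toM, toM_count_tail]
        have h4 : 0 < Multiset.count n m := Multiset.count_pos.2 hn
        rw [he] at h3
        simp
        omega

/-- The linear equivalence induced by the bijection. -/
noncomputable def PhiE (K : Type*) [Field K] (k : ℕ) (hk : 1 ≤ k) :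
    (Mk k → K) ≃ₗ[K] ({σ : List ℕ // IsComp k σ} → ℤ → K) where
  toFun c σ n := c (toMk k (σ, n))
  invFun f m := f ((Equiv.ofBijective _ (toMk_bij k hk)).symm m).1
    ((Equiv.ofBijective _ (toMk_bij k hk)).symm m).2
  map_add' _ _ := rfl
  map_smul' _ _ := rfl
  left_inv c := by
    funext m
    exact congrArg c ((Equiv.ofBijective _ (toMk_bij k hk)).apply_symm_apply m)
  right_inv f := by
    funext σ n
    have := (Equiv.ofBijective _ (toMk_bij k hk)).symm_apply_apply (σ, n)
    rw [Equiv.ofBijective_apply] at this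
    simp only [this]

/-- For every `k ≥ 1` there is a `ℤ`-equivariant `K`-linear bijection
from `P_k[X]` onto the product over all non-negative compositions of order `k` of copies
of the shift representation `K^ℤ`.  Moreover `C₁` is a singleton (so `P₁[X]` is the shift
representation `K^ℤ`), while for `k ≥ 2` the index set `C_k` is countably infinite (so
`P_k[X]` is a countably infinite product of copies of `K^ℤ`). -/
theorem stmt18 (K : Type*) [Field K] [CharZero K] (k : ℕ) (hk : 1 ≤ k) :
    (∃ Φ : (Mk k → K) ≃ₗ[K] ({σ : List ℕ // IsComp k σ} → ℤ → K),
      ∀ (z : ℤ) (c : Mk k → K),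
        Φ (zAct K k z c) = fun σ n => Φ c σ (n - z)) ∧
    (k = 1 → ∃! σ : List ℕ, IsComp 1 σ) ∧
    (2 ≤ k → Countable {σ : List ℕ // IsComp k σ} ∧
      Infinite {σ : List ℕ // IsComp k σ}) := by
  refine ⟨⟨PhiE K k hk, ?_⟩, ?_, ?_⟩
  · intro z c
    funext σ n
    change c _ = c _
    congr 1
    apply Subtype.ext
    exact toM_shift σ.1 n (-z)
  · intro _
    refine ⟨[1], ⟨by simp, by simp, by simp, by simp⟩, ?_⟩
    rintro σ ⟨h0, h1, h2, h3⟩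
    cases σ with
    | nil => exact absurd rfl h0
    | cons a l =>
      have ha : 0 < a := h1 a (by simp)
      rw [List.sum_cons] at h3
      cases l with
      | nil =>
        simp only [List.sum_nil] at h3
        rw [show a = 1 by omega]
      | cons b l =>
        have := sum_pos_of_last (last_tail h2)
        omega
  · intro h2
    refine ⟨inferInstance, ?_⟩
    refine Infinite.of_injective (fun n : ℕ => (⟨1 :: (List.replicate n 0 ++ [k - 1]), ?_, ?_, ?_, ?_⟩ :
      {σ : List ℕ // IsComp k σ})) ?_
    · simp
    · simp
    · rw [← List.cons_append, List.getLast?_append]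
      simp
      omega
    · simp
      omega
    · intro a b h
      have := congrArg (fun s => s.1.length) h
      simpa using this
end

section
/- Fix k ≥ 1 and consider P_k[X,Y] = K^{M_k^{(2)}} with the action of the frieze group F_6 ≅ ℤ × ℤ/2ℤ induced by t(a, b) = (a + 1, b + 1) and h(a, b) = (b, a). Let W = (K ⊕ K)^ℤ with ℤ acting by the shift and the generator of ℤ/2ℤ acting by swapping the two coordinates in every position, and let U = K^ℤ with ℤ acting by the shift and ℤ/2ℤ acting trivially. Then, as representations of ℤ × ℤ/2ℤ over K: P_1[X,Y] is isomorphic to W; for odd k ≥ 3, P_k[X,Y] is isomorphic to a countably infinite product of copies of W; and for even k, P_k[X,Y] is isomorphic to the product of a countably infinite product of copies of W with a countably infinite product of copies of U. -/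
/-- `P_k[X,Y]`, realized via pairs of multisets of total cardinality `k`. -/
abbrev Mk2 (k : ℕ) := {p : Multiset ℤ × Multiset ℤ //
  Multiset.card p.1 + Multiset.card p.2 = k}

/-- The action of the translation `t` of `F₆` on `P_k[X,Y]`: `(t · c)(p) = c(t⁻¹ p)`. -/
def tAct (K : Type*) [Field K] (k : ℕ) (c : Mk2 k → K) : Mk2 k → K :=
  fun p => c ⟨(shiftM p.1.1 (-1), shiftM p.1.2 (-1)), by simpa [shiftM] using p.2⟩

/-- The action of the horizontal reflection `h` of `F₆` on `P_k[X,Y]`: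
`(h · c)(a, b) = c(b, a)`. -/
def hAct (K : Type*) [Field K] (k : ℕ) (c : Mk2 k → K) : Mk2 k → K :=
  fun p => c ⟨(p.1.2, p.1.1), by rw [add_comm]; exact p.2⟩

/-- translation of a pair -/
def trP (k : ℕ) (z : ℤ) (p : Mk2 k) : Mk2 k :=
  ⟨(shiftM p.1.1 z, shiftM p.1.2 z), by simpa [shiftM] using p.2⟩

/-- reflection of a pair -/
def hP (k : ℕ) (p : Mk2 k) : Mk2 k :=
  ⟨(p.1.2, p.1.1), by rw [add_comm]; exact p.2⟩

lemma shiftM_shiftM (m : Multiset ℤ) (a b : ℤ) : shiftM (shiftM m a) b = shiftM m (a + b) := by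
  simp [shiftM, Multiset.map_map, add_assoc]

lemma shiftM_zero (m : Multiset ℤ) : shiftM m 0 = m := by
  simp [shiftM]

lemma shiftM_sum (m : Multiset ℤ) (z : ℤ) : (shiftM m z).sum = m.sum + m.card * z := by
  simp [shiftM, Multiset.sum_map_add]

lemma trP_trP (k : ℕ) (a b : ℤ) (p : Mk2 k) : trP k b (trP k a p) = trP k (a + b) p := by
  simp [trP, shiftM_shiftM]

lemma trP_zero (k : ℕ) (p : Mk2 k) : trP k 0 p = p := by
  simp [trP, shiftM_zero]

lemma hP_hP (k : ℕ) (p : Mk2 k) : hP k (hP k p) = p := rfl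

lemma hP_trP (k : ℕ) (z : ℤ) (p : Mk2 k) : hP k (trP k z p) = trP k z (hP k p) := rfl

/-- level of a pair -/
def lev (k : ℕ) (p : Mk2 k) : ℤ := (p.1.1.sum + p.1.2.sum) / (k : ℤ)

lemma lev_trP (k : ℕ) (hk : 1 ≤ k) (z : ℤ) (p : Mk2 k) : lev k (trP k z p) = lev k p + z := by
  have h : ((Multiset.card p.1.1 : ℤ) + Multiset.card p.1.2) = k := by exact_mod_cast p.2
  have hk' : (k : ℤ) ≠ 0 := by positivity
  simp only [lev, trP, shiftM_sum]
  rw [← Int.add_mul_ediv_right _ _ hk', ← h]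
  congr 1
  ring

lemma lev_hP (k : ℕ) (p : Mk2 k) : lev k (hP k p) = lev k p := by
  simp [lev, hP, add_comm]

/-- representatives of translation orbits -/
abbrev RepK (k : ℕ) := {p : Mk2 k // lev k p = 0}

/-- reflection on representatives -/
def sig (k : ℕ) (r : RepK k) : RepK k := ⟨hP k r.1, by rw [lev_hP]; exact r.2⟩

lemma sig_sig (k : ℕ) (r : RepK k) : sig k (sig k r) = r := rfl

/-- the equivariant decomposition -/
def EE (k : ℕ) (hk : 1 ≤ k) : ℤ × RepK k ≃ Mk2 k where
  toFun x := trP k x.1 x.2.1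
  invFun p := (lev k p, ⟨trP k (-lev k p) p, by rw [lev_trP k hk]; ring⟩)
  left_inv x := by
    obtain ⟨n, r, hr⟩ := x
    have : lev k (trP k n r) = n := by rw [lev_trP k hk, hr]; ring
    ext1
    · exact this
    · apply Subtype.ext
      simp [this, trP_trP, trP_zero]
  right_inv p := by
    simp [trP_trP, trP_zero]

lemma EE_tr (k : ℕ) (hk : 1 ≤ k) (n z : ℤ) (r : RepK k) :
    trP k z (EE k hk (n, r)) = EE k hk (n + z, r) := trP_trP _ _ _ _

lemma EE_h (k : ℕ) (hk : 1 ≤ k) (n : ℤ) (r : RepK k) :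
    hP k (EE k hk (n, r)) = EE k hk (n, sig k r) := rfl

lemma tAct_EE (K : Type*) [Field K] (k : ℕ) (hk : 1 ≤ k) (c : Mk2 k → K) (n : ℤ) (r : RepK k) :
    tAct K k c (EE k hk (n, r)) = c (EE k hk (n - 1, r)) := by
  rw [sub_eq_add_neg, ← EE_tr]; rfl

lemma hAct_EE (K : Type*) [Field K] (k : ℕ) (hk : 1 ≤ k) (c : Mk2 k → K) (n : ℤ) (r : RepK k) :
    hAct K k c (EE k hk (n, r)) = c (EE k hk (n, sig k r)) := rfl

/-- splitting a countable set along an involution -/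
lemma split_invol {R : Type} [Countable R] (s : R → R) (hs : ∀ r, s (s r) = r)
    (hinf : {r | s r ≠ r}.Infinite) :
    ∃ e : (ℕ × Bool) ⊕ {r // s r = r} ≃ R,
      (∀ j b, s (e (Sum.inl (j, b))) = e (Sum.inl (j, !b))) ∧
      (∀ q, s (e (Sum.inr q)) = e (Sum.inr q)) := by
  obtain ⟨f, hf⟩ := exists_injective_nat R
  have h0 : {r | f r < f (s r)}.Infinite := by
    intro hfin
    apply hinf
    refine (hfin.union (hfin.image s)).subset ?_
    intro r hr
    rcases lt_trichotomy (f r) (f (s r)) with h | h | h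
    · exact Or.inl h
    · exact absurd (hf h).symm hr
    · exact Or.inr ⟨s r, by simpa [hs] using h, hs r⟩
  have : Infinite {r | f r < f (s r)} := h0.to_subtype
  obtain ⟨g⟩ := nonempty_equiv_of_countable (α := ℕ) (β := {r | f r < f (s r)})
  let F : (ℕ × Bool) ⊕ {r // s r = r} → R :=
    Sum.elim (fun x => bif x.2 then s (g x.1).1 else (g x.1).1) (fun q => q.1)
  have hg : ∀ j, f (g j).1 < f (s (g j).1) := fun j => (g j).2
  have hF : Function.Bijective F := by
    constructor
    · rintro (⟨j, b⟩ | ⟨q, hq⟩) (⟨j', b'⟩ | ⟨q', hq'⟩) h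
      · have h1 := hg j
        have h2 := hg j'
        cases b <;> cases b' <;> simp only [F, Sum.elim_inl, cond_true, cond_false] at h
        · rw [g.injective (Subtype.ext h)]
        · rw [h, hs] at h1; omega
        · rw [← h, hs] at h2; omega
        · have := congrArg s h
          rw [hs, hs] at this
          rw [g.injective (Subtype.ext this)]
      · have h1 := hg j
        cases b <;> simp only [F, Sum.elim_inl, Sum.elim_inr, cond_true, cond_false] at h
        · rw [h, hq'] at h1; omega
        · have := congrArg s h
          rw [hs, hq', ← h] at this
          rw [← this] at h1; omega
      · have h1 := hg j'
        cases b' <;> simp only [F, Sum.elim_inl, Sum.elim_inr, cond_true, cond_false] at h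
        · rw [← h, hq] at h1; omega
        · have := congrArg s h
          rw [hs, hq, h] at this
          rw [this] at h1; omega
      · simp only [F, Sum.elim_inr] at h
        subst h; rfl
    · intro r
      rcases lt_trichotomy (f r) (f (s r)) with h | h | h
      · exact ⟨Sum.inl (g.symm ⟨r, h⟩, false), by simp [F]⟩
      · exact ⟨Sum.inr ⟨r, (hf h).symm⟩, rfl⟩
      · exact ⟨Sum.inl (g.symm ⟨s r, by simpa [hs] using h⟩, true), by simp [F, hs]⟩
  refine ⟨Equiv.ofBijective F hF, ?_, ?_⟩
  · intro j b
    cases b <;> simp [F, hs]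
  · intro q
    exact q.2

lemma moved_infinite (k : ℕ) (hk : 2 ≤ k) : {r : RepK k | sig k r ≠ r}.Infinite := by
  let P : ℕ → RepK k := fun m =>
    ⟨⟨((m : ℤ) ::ₘ (-(m : ℤ)) ::ₘ Multiset.replicate (k - 2) 0, 0), by simp; omega⟩,
      by simp [lev]⟩
  refine Set.infinite_of_injective_forall_mem (f := P) ?_ ?_
  · intro m m' h
    have h1 : (m : ℤ) ::ₘ (-(m : ℤ)) ::ₘ Multiset.replicate (k - 2) 0 =
      (m' : ℤ) ::ₘ (-(m' : ℤ)) ::ₘ Multiset.replicate (k - 2) 0 := congrArg (fun r => r.1.1.1) h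
    have h2 := congrArg (fun t => (t.map Int.natAbs).sum) h1
    simp at h2
    omega
  · intro m h
    have h1 := congrArg (fun r : RepK k => Multiset.card r.1.1.1) h
    simp [P, sig, hP] at h1

lemma one_cases (r : RepK 1) : r.1.1 = (({0}, 0) : Multiset ℤ × Multiset ℤ) ∨
    r.1.1 = ((0, {0}) : Multiset ℤ × Multiset ℤ) := by
  obtain ⟨⟨⟨a, b⟩, hc⟩, hl⟩ := r
  simp only [lev] at hl hc
  have : (a.card = 1 ∧ b.card = 0) ∨ (a.card = 0 ∧ b.card = 1) := by omega
  rcases this with ⟨h1, h2⟩ | ⟨h1, h2⟩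
  · obtain ⟨x, rfl⟩ := Multiset.card_eq_one.1 h1
    obtain rfl := Multiset.card_eq_zero.1 h2
    simp at hl
    left; simp [hl]
  · obtain ⟨x, rfl⟩ := Multiset.card_eq_one.1 h2
    obtain rfl := Multiset.card_eq_zero.1 h1
    simp at hl
    right; simp [hl]

lemma split_one : ∃ e : Bool ≃ RepK 1, ∀ b, sig 1 (e b) = e (!b) := by
  let F : Bool → RepK 1 := fun b => bif b then ⟨⟨(0, {0}), by simp⟩, by simp [lev]⟩
    else ⟨⟨({0}, 0), by simp⟩, by simp [lev]⟩
  have hF : Function.Bijective F := by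
    constructor
    · intro b b' h
      have := congrArg (fun r : RepK 1 => Multiset.card r.1.1.1) h
      cases b <;> cases b' <;> simp [F] at this ⊢
    · intro r
      rcases one_cases r with h | h
      · exact ⟨false, Subtype.ext (Subtype.ext h.symm)⟩
      · exact ⟨true, Subtype.ext (Subtype.ext h.symm)⟩
  refine ⟨Equiv.ofBijective F hF, ?_⟩
  intro b
  cases b <;> rfl

/-- linear algebra for `k = 1` -/
def PhiOne (K : Type*) [Field K] {R : Type} (e : Bool ≃ R) :
    (ℤ × R → K) ≃ₗ[K] (ℤ → K × K) where
  toFun c n := (c (n, e false), c (n, e true))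
  invFun w x := bif e.symm x.2 then (w x.1).2 else (w x.1).1
  map_add' _ _ := rfl
  map_smul' _ _ := rfl
  left_inv c := by
    funext ⟨n, r⟩
    obtain ⟨b, rfl⟩ := e.surjective r
    cases b <;> simp
  right_inv w := by
    funext n
    simp

/-- linear algebra for odd `k` -/
def PhiOdd (K : Type*) [Field K] {R : Type} (e : ℕ × Bool ≃ R) :
    (ℤ × R → K) ≃ₗ[K] (ℕ → ℤ → K × K) where
  toFun c j n := (c (n, e (j, false)), c (n, e (j, true)))
  invFun w x := bif (e.symm x.2).2 then (w (e.symm x.2).1 x.1).2 else (w (e.symm x.2).1 x.1).1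
  map_add' _ _ := rfl
  map_smul' _ _ := rfl
  left_inv c := by
    funext ⟨n, r⟩
    obtain ⟨⟨j, b⟩, rfl⟩ := e.surjective r
    cases b <;> simp
  right_inv w := by
    funext j n
    simp

/-- symmetric part -/
def symPart {K : Type*} [Field K] {R Q : Type} (e : (ℕ × Bool) ⊕ Q ≃ R) (c : ℤ × R → K) (n : ℤ) :
    ℕ ⊕ Q → K
  | Sum.inl j => c (n, e (Sum.inl (j, false))) + c (n, e (Sum.inl (j, true)))
  | Sum.inr q => c (n, e (Sum.inr q))

/-- antisymmetric part -/
def altPart {K : Type*} [Field K] {R Q : Type} (e : (ℕ × Bool) ⊕ Q ≃ R) (c : ℤ × R → K) (n : ℤ)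
    (j : ℕ) : K :=
  c (n, e (Sum.inl (j, false))) - c (n, e (Sum.inl (j, true)))

/-- symmetric part on the other side -/
def symOut {K : Type*} [Field K] (w : (ℕ → ℤ → K × K) × (ℕ → ℤ → K)) (n : ℤ) : ℕ ⊕ ℕ → K
  | Sum.inl j => ((w.1 j n).1 + (w.1 j n).2) / 2
  | Sum.inr j => w.2 j n

/-- antisymmetric part on the other side -/
def altOut {K : Type*} [Field K] (w : (ℕ → ℤ → K × K) × (ℕ → ℤ → K)) (n : ℤ) (j : ℕ) : K :=
  ((w.1 j n).1 - (w.1 j n).2) / 2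

/-- reassemble -/
def assem {K : Type*} [Field K] {Q : Type} (S : ℕ ⊕ Q → K) (D : ℕ → K) : (ℕ × Bool) ⊕ Q → K
  | Sum.inl (j, false) => (S (Sum.inl j) + D j) / 2
  | Sum.inl (j, true) => (S (Sum.inl j) - D j) / 2
  | Sum.inr q => S (Sum.inr q)

/-- linear algebra for even `k` -/
def PhiEven (K : Type*) [Field K] [CharZero K] {R Q : Type} (e : (ℕ × Bool) ⊕ Q ≃ R)
    (g : ℕ ⊕ Q ≃ ℕ ⊕ ℕ) :
    (ℤ × R → K) ≃ₗ[K] ((ℕ → ℤ → K × K) × (ℕ → ℤ → K)) where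
  toFun c := (fun j n => (symPart e c n (g.symm (Sum.inl j)) + altPart e c n j,
      symPart e c n (g.symm (Sum.inl j)) - altPart e c n j),
    fun j n => symPart e c n (g.symm (Sum.inr j)))
  invFun w x := assem (fun i => symOut w x.1 (g i)) (altOut w x.1) (e.symm x.2)
  map_add' c d := by
    have h1 : ∀ n i, symPart e (c + d) n i = symPart e c n i + symPart e d n i := by
      rintro n (j | q) <;> simp [symPart]
      ring
    have h2 : ∀ n i, altPart e (c + d) n i = altPart e c n i + altPart e d n i := by
      intro n j; simp [altPart]; ring
    ext j n <;> simp [h1, h2] <;> ring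
  map_smul' a c := by
    have h1 : ∀ n i, symPart e (a • c) n i = a * symPart e c n i := by
      rintro n (j | q) <;> simp [symPart]
      ring
    have h2 : ∀ n i, altPart e (a • c) n i = a * altPart e c n i := by
      intro n j; simp [altPart]; ring
    ext j n <;> simp [h1, h2] <;> ring
  left_inv c := by
    funext ⟨n, r⟩
    obtain ⟨x, rfl⟩ := e.surjective r
    have key : ∀ i, symOut (fun j n => (symPart e c n (g.symm (Sum.inl j)) + altPart e c n j,
      symPart e c n (g.symm (Sum.inl j)) - altPart e c n j),
      fun j n => symPart e c n (g.symm (Sum.inr j))) n i = symPart e c n (g.symm i) := by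
      rintro (j | j) <;> simp [symOut]
    have key2 : ∀ j, altOut (fun j n => (symPart e c n (g.symm (Sum.inl j)) + altPart e c n j,
      symPart e c n (g.symm (Sum.inl j)) - altPart e c n j),
      fun j n => symPart e c n (g.symm (Sum.inr j))) n j = altPart e c n j := by
      intro j
      simp only [altOut]; ring
    rcases x with ⟨j, b⟩ | q
    · cases b <;> simp only [Equiv.symm_apply_apply, assem, key, key2] <;>
        simp only [symPart, altPart] <;> ring
    · simp only [Equiv.symm_apply_apply, assem, key]; rfl
  right_inv w := by
    have key : ∀ n i, symPart e (fun x : ℤ × R =>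
        assem (fun i => symOut w x.1 (g i)) (altOut w x.1) (e.symm x.2)) n i
        = symOut w n (g i) := by
      rintro n (j | q) <;> simp only [symPart, Equiv.symm_apply_apply, assem]
      ring
    have key2 : ∀ n j, altPart e (fun x : ℤ × R =>
        assem (fun i => symOut w x.1 (g i)) (altOut w x.1) (e.symm x.2)) n j
        = altOut w n j := by
      intro n j
      simp only [altPart, Equiv.symm_apply_apply, assem]
      ring
    refine Prod.ext ?_ ?_
    · funext j n
      simp only [key, key2, Equiv.apply_symm_apply]
      simp only [symOut, altOut]
      ext <;> simp only <;> ring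
    · funext j n
      simp only [key, Equiv.apply_symm_apply]; rfl

/-- As representations of `F₆ ≅ ℤ × ℤ/2ℤ` over `K`: `P₁[X,Y]` is
isomorphic to `W = (K ⊕ K)^ℤ` (shift action of `ℤ`, coordinate swap for `ℤ/2ℤ`); for odd
`k ≥ 3`, `P_k[X,Y]` is a countably infinite product of copies of `W`; and for even `k`,
`P_k[X,Y]` is the product of a countably infinite product of copies of `W` with a
countably infinite product of copies of `U = K^ℤ` (shift action, trivial `ℤ/2ℤ`-action). -/
theorem stmt19 (K : Type*) [Field K] [CharZero K] (k : ℕ) (hk : 1 ≤ k) :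
    (k = 1 → ∃ Φ : (Mk2 k → K) ≃ₗ[K] (ℤ → K × K),
      (∀ c, Φ (tAct K k c) = fun n => Φ c (n - 1)) ∧
      (∀ c, Φ (hAct K k c) = fun n => (Φ c n).swap)) ∧
    (Odd k → 3 ≤ k → ∃ Φ : (Mk2 k → K) ≃ₗ[K] (ℕ → ℤ → K × K),
      (∀ c, Φ (tAct K k c) = fun j n => Φ c j (n - 1)) ∧
      (∀ c, Φ (hAct K k c) = fun j n => (Φ c j n).swap)) ∧
    (Even k → ∃ Φ : (Mk2 k → K) ≃ₗ[K] ((ℕ → ℤ → K × K) × (ℕ → ℤ → K)),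
      (∀ c, Φ (tAct K k c) =
        ((fun j n => (Φ c).1 j (n - 1)), (fun j n => (Φ c).2 j (n - 1)))) ∧
      (∀ c, Φ (hAct K k c) = ((fun j n => ((Φ c).1 j n).swap), (Φ c).2))) := by
  refine ⟨?_, ?_, ?_⟩
  · rintro rfl
    obtain ⟨e, he⟩ := split_one
    refine ⟨(LinearEquiv.funCongrLeft K K (EE 1 hk)).trans (PhiOne K e), ?_, ?_⟩
    · intro c
      funext n
      exact Prod.ext (tAct_EE K 1 hk c n _) (tAct_EE K 1 hk c n _)
    · intro c
      funext n
      refine Prod.ext ((hAct_EE K 1 hk c n (e false)).trans ?_)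
        ((hAct_EE K 1 hk c n (e true)).trans ?_) <;> rw [he] <;> rfl
  · intro hodd h3
    obtain ⟨e, he, -⟩ := split_invol (sig k) (sig_sig k) (moved_infinite k (by omega))
    have : IsEmpty {r // sig k r = r} := by
      constructor
      rintro ⟨r, hr⟩
      have h1 : Multiset.card r.1.1.2 = Multiset.card r.1.1.1 :=
        congrArg (fun r : RepK k => Multiset.card r.1.1.1) hr
      have h2 := r.1.2
      obtain ⟨m, hm⟩ := hodd
      omega
    let e' : ℕ × Bool ≃ RepK k := (Equiv.sumEmpty _ _).symm.trans e
    have he' : ∀ j b, sig k (e' (j, b)) = e' (j, !b) := he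
    refine ⟨(LinearEquiv.funCongrLeft K K (EE k hk)).trans (PhiOdd K e'), ?_, ?_⟩
    · intro c
      funext j n
      exact Prod.ext (tAct_EE K k hk c n _) (tAct_EE K k hk c n _)
    · intro c
      funext j n
      refine Prod.ext ((hAct_EE K k hk c n (e' (j, false))).trans ?_)
        ((hAct_EE K k hk c n (e' (j, true))).trans ?_) <;> rw [he'] <;> rfl
  · intro heven
    have h2 : 2 ≤ k := by obtain ⟨m, hm⟩ := heven; omega
    obtain ⟨e, he, heq⟩ := split_invol (sig k) (sig_sig k) (moved_infinite k h2)
    obtain ⟨g⟩ := nonempty_equiv_of_countable (α := ℕ ⊕ {r // sig k r = r}) (β := ℕ ⊕ ℕ)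
    refine ⟨(LinearEquiv.funCongrLeft K K (EE k hk)).trans (PhiEven K e g), ?_, ?_⟩
    · intro c
      have h1 : ∀ n i, symPart e (tAct K k c ∘ EE k hk) n i
          = symPart e (c ∘ EE k hk) (n - 1) i := by
        rintro n (j | q) <;> simp only [symPart, Function.comp, tAct_EE]
      have h2 : ∀ n i, altPart e (tAct K k c ∘ EE k hk) n i
          = altPart e (c ∘ EE k hk) (n - 1) i := by
        intro n j; simp only [altPart, Function.comp, tAct_EE]
      refine Prod.ext ?_ ?_
      · funext j n
        exact Prod.ext (congrArg₂ (· + ·) (h1 _ _) (h2 _ _)) (congrArg₂ (· - ·) (h1 _ _) (h2 _ _))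
      · funext j n
        exact h1 _ _
    · intro c
      have h1 : ∀ n i, symPart e (hAct K k c ∘ EE k hk) n i
          = symPart e (c ∘ EE k hk) n i := by
        rintro n (j | q) <;> simp only [symPart, Function.comp, hAct_EE, he, heq]
        exact add_comm _ _
      have h2 : ∀ n i, altPart e (hAct K k c ∘ EE k hk) n i
          = - altPart e (c ∘ EE k hk) n i := by
        intro n j; simp only [altPart, Function.comp, hAct_EE, he]; exact (neg_sub _ _).symm
      refine Prod.ext ?_ ?_
      · funext j n
        exact Prod.ext ((congrArg₂ (· + ·) (h1 _ _) (h2 _ _)).trans (sub_eq_add_neg _ _).symm)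
          ((congrArg₂ (· - ·) (h1 _ _) (h2 _ _)).trans (sub_neg_eq_add _ _))
      · funext j n
        exact h1 _ _
end
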